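/- Suppose 𝒜 ⊆ FIN^[∞] satisfies: (i) for every A ∈ 𝒜, E_A is coinfinite, and (ii) for distinct A, A' ∈ 𝒜, E_A ∩ E_{A'} is finite. If 𝒜 is infinite and |𝒜| < 𝔟_h(p≠*) for every h : ω → ω with h(n) → ∞, then there is a B ∈ FIN^[∞] which is almost disjoint from every element of 𝒜. -/

import Mathlib

open Set

/-- `A` is an infinite block sequence in `FIN`: each `A n` is a nonempty finite subset of
`ω` and `max (A n) < min (A (n+1))`. -/
def IsFINBlockSeq (A : ℕ → Finset ℕ) : Prop :=
  (∀ n, (A n).Nonempty) ∧ ∀ n, ∀ i ∈ A n, ∀ j ∈ A (n + 1), i < j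

/-- `FU(A)`, the combinatorial subspace generated by `A`: all unions
`a_{n₀} ∪ ⋯ ∪ a_{n_k}` with `n₀ < ⋯ < n_k`. -/
def FU (A : ℕ → Finset ℕ) : Set (Finset ℕ) :=
  { s | ∃ t : Finset ℕ, t.Nonempty ∧ s = t.biUnion A }

/-- `E_A = ⋃ {a_n : |a_n| = 1}`. -/
def EA (A : ℕ → Finset ℕ) : Set ℕ :=
  { m | ∃ n, (A n).card = 1 ∧ m ∈ A n }

/-- `𝔟_h(p≠*)`: the minimum cardinality of a family `ℱ ⊆ ω^ω` such that for every partial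
function `g` with infinite domain, bounded by `h` on its domain, some `f ∈ ℱ` equals `g`
infinitely often on the domain. -/
noncomputable def bhNum (h : ℕ → ℕ) : Cardinal :=
  sInf { c | ∃ Fam : Set (ℕ → ℕ), Cardinal.mk Fam = c ∧
    ∀ (D : Set ℕ) (g : ℕ → ℕ), D.Infinite → (∀ n ∈ D, g n ≤ h n) →
      ∃ f ∈ Fam, { n ∈ D | f n = g n }.Infinite }

lemma block_lt {A : ℕ → Finset ℕ} (hA : IsFINBlockSeq A) {i j : ℕ} (hij : i < j) :
    ∀ a ∈ A i, ∀ b ∈ A j, a < b := by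
  induction j, hij using Nat.le_induction with
  | base => exact hA.2 i
  | succ m hm ih =>
    intro a ha b hb
    obtain ⟨c, hc⟩ := hA.1 m
    exact (ih a ha c hc).trans (hA.2 m c hc b hb)

lemma block_eq {A : ℕ → Finset ℕ} (hA : IsFINBlockSeq A) {i j a : ℕ}
    (hi : a ∈ A i) (hj : a ∈ A j) : i = j := by
  rcases lt_trichotomy i j with h | h | h
  · exact absurd (block_lt hA h a hi a hj) (lt_irrefl _)
  · exact h
  · exact absurd (block_lt hA h a hj a hi) (lt_irrefl _)

lemma block_EA {A : ℕ → Finset ℕ} (hA : IsFINBlockSeq A) {q e : ℕ}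
    (he : e ∈ EA A) (hq : e ∈ A q) : ∀ r ∈ A q, r = e := by
  obtain ⟨n, hn, hen⟩ := he
  have := block_eq hA hen hq
  subst this
  obtain ⟨c, hc⟩ := Finset.card_eq_one.1 hn
  intro r hr
  rw [hc] at hr hen
  simp at hr hen
  omega

lemma fu_finite {A : ℕ → Finset ℕ} (hA : IsFINBlockSeq A) (Y : Set ℕ) (w z : ℕ → ℕ)
    (hwz : ∀ k, w k < z k) (hzw : ∀ m n, m < n → z m < w n)
    (hw : ∀ k, w k ∉ Y) (hz : ∀ k, z k ∈ Y)
    (hY : (Y ∩ EA A).Finite ∨ Y = EA A) (K₀ : ℕ)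
    (hbad : ∀ k, K₀ ≤ k → ∀ p, w k ∈ A p → z k ∈ A p → (∀ t ∈ A p, t ≤ z k) → False) :
    (FU (fun k => {w k, z k}) ∩ FU A).Finite := by
  have hzmono : StrictMono z := fun m n h => (hzw m n h).trans (hwz n)
  obtain ⟨K₁, hK₁⟩ : ∃ K₁, Y = EA A ∨ ∀ k, K₁ ≤ k → z k ∉ EA A := by
    rcases hY with h | h
    · obtain ⟨M, hM⟩ := h.bddAbove
      refine ⟨M + 1, Or.inr fun k hk he => ?_⟩
      have h1 := hM ⟨hz k, he⟩
      have h2 := hzmono.id_le k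
      simp at h2
      omega
    · exact ⟨0, Or.inl h⟩
  refine ((Finset.range (max K₀ K₁)).powerset.image
    (fun t => t.biUnion (fun k => ({w k, z k} : Finset ℕ)))).finite_toSet.subset ?_
  rintro s ⟨⟨t, htne, hst⟩, ⟨u, -, hsu⟩⟩
  simp only [Finset.coe_image, Set.mem_image, Finset.mem_coe, Finset.mem_powerset]
  refine ⟨t, ?_, hst.symm⟩
  by_contra hcon
  have hnt := Finset.max'_mem t htne
  have hmax : ∀ m ∈ t, m ≤ t.max' htne := fun m hm => Finset.le_max' t m hm
  set n := t.max' htne with hn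
  have hKn : max K₀ K₁ ≤ n := by
    by_contra hlt
    apply hcon
    intro m hm
    have := hmax m hm
    simp only [Finset.mem_range]
    omega
  have hs1 : ∀ r ∈ s, ∃ m ∈ t, r = w m ∨ r = z m := by
    intro r hr
    rw [hst] at hr
    simpa using hr
  have hs2 : ∀ r ∈ s, ∃ p ∈ u, r ∈ A p := by
    intro r hr
    rw [hsu] at hr
    simpa using hr
  have hs3 : ∀ p ∈ u, ∀ r ∈ A p, r ∈ s := by
    intro p hp r hr
    rw [hsu]
    exact Finset.mem_biUnion.2 ⟨p, hp, hr⟩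
  have hs4 : ∀ m ∈ t, w m ∈ s ∧ z m ∈ s := by
    intro m hm
    rw [hst]
    constructor <;> exact Finset.mem_biUnion.2 ⟨m, hm, by simp⟩
  -- elements of `s`
  have hs5 : ∀ r ∈ s, r = w n ∨ r = z n ∨ ∃ m ∈ t, r ≤ z m ∧ z m < w n := by
    intro r hr
    obtain ⟨m, hm, h⟩ := hs1 r hr
    rcases (hmax m hm).lt_or_eq with hlt | heq
    · refine Or.inr (Or.inr ⟨m, hm, ?_, hzw m n hlt⟩)
      have := hwz m
      omega
    · rw [heq] at h
      tauto
  have hwzn := hwz n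
  obtain ⟨p, hpu, hp⟩ := hs2 _ (hs4 n hnt).1
  obtain ⟨q, hqu, hq⟩ := hs2 _ (hs4 n hnt).2
  have hle : ∀ r ∈ s, r ≤ z n := by
    intro r hr
    rcases hs5 r hr with h | h | ⟨m, hm, h1, h2⟩ <;> omega
  by_cases hpq : p = q
  · subst hpq
    exact hbad n (by omega) p hp hq fun r hr => hle r (hs3 p hpu r hr)
  have hpq' : p < q := by
    rcases lt_or_gt_of_ne hpq with h | h
    · exact h
    · have := block_lt hA h _ hq _ hp
      omega
  have hAq : A q = {z n} := by
    apply Finset.eq_singleton_iff_unique_mem.2 ⟨hq, ?_⟩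
    intro r hr
    have h0 := block_lt hA hpq' _ hp _ hr
    rcases hs5 r (hs3 q hqu r hr) with h | h | ⟨m, hm, h1, h2⟩ <;> omega
  have hzE : z n ∈ EA A := ⟨q, by simp [hAq], hq⟩
  rcases hK₁ with hYE | hK₁
  swap
  · exact hK₁ n (by omega) hzE
  apply hw n
  rw [hYE]
  refine ⟨p, Finset.card_eq_one.2 ⟨w n, Finset.eq_singleton_iff_unique_mem.2 ⟨hp, ?_⟩⟩, hp⟩
  intro r hr
  rcases hs5 r (hs3 p hpu r hr) with h | h | ⟨m, hm, h1, h2⟩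
  · exact h
  · subst h
    exact absurd (block_eq hA hr hq) hpq
  · exfalso
    obtain ⟨o, hou, ho⟩ := hs2 _ (hs4 m hm).2
    have hE : z m ∈ EA A := hYE ▸ hz m
    have hall := block_EA hA hE ho
    rcases lt_trichotomy o p with h | h | h
    · have := block_lt hA h _ ho _ hr
      omega
    · subst h
      have := hall _ hp
      omega
    · have := block_lt hA h _ hp _ ho
      omega

lemma exists_Y (𝒜 : Set (ℕ → Finset ℕ))
    (hcoinf : ∀ A ∈ 𝒜, (EA A)ᶜ.Infinite)
    (hpair : 𝒜.Pairwise fun A A' => (EA A ∩ EA A').Finite) :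
    ∃ Y : Set ℕ, Y.Infinite ∧ Yᶜ.Infinite ∧
      ∀ A ∈ 𝒜, (Y ∩ EA A).Finite ∨ Y = EA A := by
  by_cases h : ∃ A ∈ 𝒜, (EA A).Infinite
  · obtain ⟨A₁, hA₁, hi⟩ := h
    refine ⟨EA A₁, hi, hcoinf A₁ hA₁, fun A hA => ?_⟩
    by_cases he : A₁ = A
    · right; rw [he]
    · left; exact hpair hA₁ hA he
  · push Not at h
    refine ⟨{n | n % 2 = 0}, ?_, ?_, fun A hA => Or.inl ?_⟩
    · exact Set.infinite_of_forall_exists_gt fun n => ⟨2 * n + 2, by simp, by omega⟩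
    · exact Set.infinite_of_forall_exists_gt fun n => ⟨2 * n + 1, by simp, by omega⟩
    · exact (Set.not_infinite.1 (by simpa using h A hA)).subset Set.inter_subset_right

lemma exists_xy (Y : Set ℕ) (h1 : Y.Infinite) (h2 : Yᶜ.Infinite) :
    ∃ (x : ℕ → ℕ) (y : ℕ → ℕ → ℕ), (∀ n, x n ∉ Y) ∧ (∀ n j, y n j ∈ Y) ∧
      (∀ n j, x n < y n j) ∧ (∀ n, StrictMono (y n)) ∧ ∀ m n, m < n → y m m < x n := by
  classical
  have a1 : ∀ k, Nat.nth (· ∈ Y) k ∈ Y := fun k => Nat.nth_mem_of_infinite h1 k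
  have a2 : ∀ k, Nat.nth (· ∈ Yᶜ) k ∈ Yᶜ := fun k => Nat.nth_mem_of_infinite h2 k
  have m1 : StrictMono (Nat.nth (· ∈ Y)) := Nat.nth_strictMono h1
  have m2 : StrictMono (Nat.nth (· ∈ Yᶜ)) := Nat.nth_strictMono h2
  let yy : ℕ → ℕ → ℕ := fun a j => Nat.nth (· ∈ Y) (a + 1 + j)
  let x : ℕ → ℕ := fun n => Nat.rec (Nat.nth (· ∈ Yᶜ) 0)
    (fun n a => Nat.nth (· ∈ Yᶜ) (yy a n + 1)) n
  have hx : ∀ n, x (n + 1) = Nat.nth (· ∈ Yᶜ) (yy (x n) n + 1) := fun n => rfl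
  have hxy : ∀ n j, x n < yy (x n) j := fun n j => by
    have := m1.id_le (x n + 1 + j)
    simp only [id] at this
    change _ < Nat.nth (· ∈ Y) (x n + 1 + j)
    omega
  have hs : ∀ n, yy (x n) n < x (n + 1) := fun n => by
    rw [hx]
    have := m2.id_le (yy (x n) n + 1)
    simp only [id] at this
    omega
  have hxm : StrictMono x := strictMono_nat_of_lt_succ fun n => (hxy n n).trans (hs n)
  refine ⟨x, fun n j => yy (x n) j, ?_, fun n j => a1 _, hxy, ?_, ?_⟩
  · intro n
    cases n with
    | zero => exact a2 0
    | succ n => rw [hx]; exact a2 _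
  · intro n i j hij
    exact m1 (by omega)
  · intro m n hmn
    exact (hs m).trans_le (hxm.monotone hmn)

/-- If `𝒜 ⊆ FIN^[∞]` is infinite, each `E_A` (`A ∈ 𝒜`) is coinfinite, the `E_A` are
pairwise almost disjoint, and `|𝒜| < 𝔟_h(p≠*)` for every `h` tending to infinity, then
there is `B ∈ FIN^[∞]` almost disjoint from every element of `𝒜`. -/
theorem stmt7 (𝒜 : Set (ℕ → Finset ℕ))
    (hseq : ∀ A ∈ 𝒜, IsFINBlockSeq A)
    (hcoinf : ∀ A ∈ 𝒜, (EA A)ᶜ.Infinite)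
    (hpair : 𝒜.Pairwise fun A A' => (EA A ∩ EA A').Finite)
    (hinf : 𝒜.Infinite)
    (hsmall : ∀ h : ℕ → ℕ, Filter.Tendsto h Filter.atTop Filter.atTop →
      Cardinal.mk 𝒜 < bhNum h) :
    ∃ B : ℕ → Finset ℕ, IsFINBlockSeq B ∧ ∀ A ∈ 𝒜, (FU B ∩ FU A).Finite := by
  classical
  obtain ⟨Y, hY1, hY2, hY⟩ := exists_Y 𝒜 hcoinf hpair
  obtain ⟨x, y, hx, hy, hxy, hym, hyx⟩ := exists_xy Y hY1 hY2
  -- the prediction made by `A` at `n`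
  let P : (ℕ → Finset ℕ) → ℕ → ℕ → Prop := fun A n j =>
    ∃ i, x n ∈ A i ∧ y n j ∈ A i ∧ ∀ t ∈ A i, t ≤ y n j
  let f : (ℕ → Finset ℕ) → ℕ → ℕ := fun A n => if h : ∃ j, P A n j then h.choose else 0
  have hf : ∀ A ∈ 𝒜, ∀ n j, P A n j → f A n = j := by
    intro A hA n j hj
    have hex : ∃ j, P A n j := ⟨j, hj⟩
    have hspec := hex.choose_spec
    have hfe : f A n = hex.choose := dif_pos hex
    rw [hfe]
    obtain ⟨i, hi1, hi2, hi3⟩ := hspec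
    obtain ⟨i', hi1', hi2', hi3'⟩ := hj
    have := block_eq (hseq A hA) hi1 hi1'
    subst this
    exact (hym n).injective (le_antisymm (hi3' _ hi2) (hi3 _ hi2'))
  have hlt := hsmall id Filter.tendsto_id
  have hnot : ¬ ∀ (D : Set ℕ) (g : ℕ → ℕ), D.Infinite → (∀ n ∈ D, g n ≤ id n) →
      ∃ φ ∈ f '' 𝒜, { n ∈ D | φ n = g n }.Infinite := by
    intro hall
    have h1 : bhNum id ≤ Cardinal.mk (f '' 𝒜) := csInf_le' ⟨f '' 𝒜, rfl, hall⟩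
    exact absurd (hlt.trans_le (h1.trans Cardinal.mk_image_le)) (lt_irrefl _)
  push Not at hnot
  obtain ⟨D, g, hD, hg, hev⟩ := hnot
  let d : ℕ → ℕ := Nat.nth (· ∈ D)
  have hdD : ∀ k, d k ∈ D := fun k => Nat.nth_mem_of_infinite hD k
  have hdm : StrictMono d := Nat.nth_strictMono hD
  have hwz : ∀ k, x (d k) < y (d k) (g (d k)) := fun k => hxy _ _
  have hzw : ∀ m n, m < n → y (d m) (g (d m)) < x (d n) := fun m n hmn =>
    ((hym (d m)).monotone (hg _ (hdD m))).trans_lt (hyx _ _ (hdm hmn))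
  refine ⟨fun k => {x (d k), y (d k) (g (d k))}, ⟨fun n => by simp, ?_⟩, ?_⟩
  · intro n i hi j hj
    have e1 := hwz n
    have e2 := hwz (n + 1)
    have e3 := hzw n (n + 1) (by omega)
    simp only [Finset.mem_insert, Finset.mem_singleton] at hi hj
    omega
  · intro A hA
    have hfin : { n ∈ D | f A n = g n }.Finite :=
      Set.not_infinite.1 (by simpa using hev (f A) ⟨A, hA, rfl⟩)
    obtain ⟨M, hM⟩ := hfin.bddAbove
    refine fu_finite (hseq A hA) Y (fun k => x (d k)) (fun k => y (d k) (g (d k))) hwz hzw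
      (fun k => hx _) (fun k => hy _ _) (hY A hA) (M + 1) ?_
    intro k hk p hp1 hp2 hp3
    have h1 := hM ⟨hdD k, hf A hA (d k) (g (d k)) ⟨p, hp1, hp2, hp3⟩⟩
    have h2 := hdm.id_le k
    simp only [id] at h2
    omega
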